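/- Let p ≥ 1 and let F : ℂ^p → ℂ^p be holomorphic in a neighborhood of 0 with F(0) = 0 and derivative DF(0) = id. Then there exists a map ψ : ℂ^p → ℂ^p, holomorphic in a neighborhood of 0, with ψ(0) = 0 and Dψ(0) = id, such that: (i) ψ preserves every coordinate hyperplane, i.e. for each j and for all ζ sufficiently close to 0, ζ_j = 0 implies ψ_j(ζ) = 0; and (ii) for each j, the j-th component of F∘ψ − id is independent of ζ_j, i.e. ∂((F∘ψ)_j)/∂ζ_j ≡ 1 on a neighborhood of 0. Moreover ψ is unique as a germ at 0: any two holomorphic maps with these properties coincide in a neighborhood of 0. -/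

import Mathlib

/-- `ψ` is a normalizing map for `F`: it is holomorphic near `0`, fixes `0`, is tangent to the
identity, preserves every coordinate hyperplane near `0`, and the `j`-th component of `F∘ψ`
has partial derivative `1` in the `j`-th direction near `0` (i.e. `(F∘ψ − id)_j` is
independent of `ζ_j`). -/
def IsNormalizingMap (p : ℕ) (F ψ : (Fin p → ℂ) → (Fin p → ℂ)) : Prop :=
  AnalyticAt ℂ ψ 0 ∧ ψ 0 = 0 ∧
  fderiv ℂ ψ 0 = ContinuousLinearMap.id ℂ (Fin p → ℂ) ∧
  (∀ᶠ ζ in nhds (0 : Fin p → ℂ), ∀ j, ζ j = 0 → ψ ζ j = 0) ∧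
  (∀ᶠ ζ in nhds (0 : Fin p → ℂ), ∀ j,
    fderiv ℂ (fun ζ' => F (ψ ζ') j) ζ (Pi.single j 1) = 1)

/-!
Write `π_S` for the linear map setting the coordinates in `S` to zero. Conditions (i) and (ii)
together say that `F(ψ ζ)_j - F(ψ(π_j ζ))_j + ψ(π_j ζ)_j = ζ_j` for all `j`. Applied at the points
`π_S ζ`, this becomes a finite system `Φ(y) = (π_S ζ)_S` for the unknown vectors `y_S = ψ(π_S ζ)`,
and `Φ` has derivative the identity at `0` because `F` does. The inverse function theorem therefore
forces `ψ ζ = Φ⁻¹((π_S ζ)_S)_∅`. Conversely, local injectivity of `Φ` shows that the components of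
the solution are compatible, `y_{S ∪ {j}}(ζ) = y_S(π_j ζ)`, so this formula does solve the equation.
-/

open Filter Topology

section InverseFunction

variable {𝕜 E E' : Type*} [NontriviallyNormedField 𝕜]
  [NormedAddCommGroup E] [NormedSpace 𝕜 E] [CompleteSpace E]
  [NormedAddCommGroup E'] [NormedSpace 𝕜 E']

lemma exists_analyticAt_local_inverse {f : E → E'} {f' : E ≃L[𝕜] E'} {a : E}
    (hf : AnalyticAt 𝕜 f a) (hf' : HasFDerivAt f (f' : E →L[𝕜] E') a) :
    ∃ g : E' → E, AnalyticAt 𝕜 g (f a) ∧ HasFDerivAt g (f'.symm : E' →L[𝕜] E) (f a) ∧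
      (∀ᶠ x in 𝓝 a, g (f x) = x) ∧ ∀ᶠ y in 𝓝 (f a), f (g y) = y := by
  have hstrict : HasStrictFDerivAt f (f' : E →L[𝕜] E') a :=
    hf'.fderiv ▸ hf.hasStrictFDerivAt
  exact ⟨hstrict.localInverse f f' a,
    (hstrict.toOpenPartialHomeomorph f).analyticAt_symm'
      hstrict.mem_toOpenPartialHomeomorph_source hf hf'.fderiv,
    hstrict.to_localInverse.hasFDerivAt, hstrict.eventually_left_inverse,
    hstrict.eventually_right_inverse⟩

end InverseFunction

section ZeroOn

variable {ι 𝕜 : Type*} [DecidableEq ι] [NontriviallyNormedField 𝕜]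

/-- The coordinate projection that sets the coordinates in `S` to zero and fixes the others. -/
def zeroOn (S : Finset ι) : (ι → 𝕜) →L[𝕜] (ι → 𝕜) :=
  ContinuousLinearMap.pi fun j => if j ∈ S then 0 else ContinuousLinearMap.proj j

lemma zeroOn_apply (S : Finset ι) (ζ : ι → 𝕜) (j : ι) :
    zeroOn S ζ j = if j ∈ S then 0 else ζ j := by
  by_cases hj : j ∈ S <;> simp [zeroOn, hj]

lemma zeroOn_empty (ζ : ι → 𝕜) : zeroOn ∅ ζ = ζ := by
  ext j
  simp [zeroOn_apply]

lemma zeroOn_zeroOn (S T : Finset ι) (ζ : ι → 𝕜) : zeroOn S (zeroOn T ζ) = zeroOn (S ∪ T) ζ := by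
  ext j
  simp only [zeroOn_apply, Finset.mem_union, ite_or]

lemma zeroOn_singleton (j : ι) (ζ : ι → 𝕜) : zeroOn {j} ζ = Function.update ζ j 0 := by
  ext k
  simp only [zeroOn_apply, Finset.mem_singleton, Function.update_apply]

lemma zeroOn_singleton_apply_self (j : ι) (ζ : ι → 𝕜) : zeroOn {j} ζ j = 0 := by
  rw [zeroOn_singleton, Function.update_self]

lemma zeroOn_singleton_of_apply_eq_zero {j : ι} {ζ : ι → 𝕜} (hζ : ζ j = 0) :
    zeroOn {j} ζ = ζ := by
  rw [zeroOn_singleton, Function.update_eq_self_iff, hζ]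

lemma zeroOn_singleton_single (j : ι) (a : 𝕜) : zeroOn {j} (Pi.single j a) = 0 := by
  rw [zeroOn_singleton, Pi.single, Function.update_idem, Function.update_eq_self_iff, Pi.zero_apply]

lemma tendsto_zeroOn_nhds_zero (S : Finset ι) : Tendsto (zeroOn (𝕜 := 𝕜) S) (𝓝 0) (𝓝 0) :=
  (zeroOn S).continuous.tendsto' 0 0 (map_zero _)

end ZeroOn

section PartialDerivative

variable {ι 𝕜 E : Type*} [DecidableEq ι] [RCLike 𝕜]
  [NormedAddCommGroup E] [NormedSpace 𝕜 E]

lemma update_mem_ball_zero [Fintype ι] {r : ℝ} {ζ : ι → 𝕜} {t : 𝕜} (hζ : ζ ∈ Metric.ball 0 r)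
    (ht : t ∈ Metric.ball 0 r) (j : ι) : Function.update ζ j t ∈ Metric.ball 0 r := by
  have hr : 0 < r := Metric.pos_of_mem_ball ht
  rw [ball_pi _ hr] at hζ ⊢
  exact (Set.update_mem_pi_iff_of_mem hζ).2 fun _ => ht

lemma eventually_eq_comp_zeroOn_of_fderiv_single_eq_zero [Finite ι] {h : (ι → 𝕜) → E} {j : ι}
    (hdiff : ∀ᶠ ζ in 𝓝 0, DifferentiableAt 𝕜 h ζ)
    (hderiv : ∀ᶠ ζ in 𝓝 0, fderiv 𝕜 h ζ (Pi.single j 1) = 0) :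
    ∀ᶠ ζ in 𝓝 0, h ζ = h (zeroOn {j} ζ) := by
  cases nonempty_fintype ι
  obtain ⟨r, hr, hball⟩ := Metric.eventually_nhds_iff_ball.1 (hdiff.and hderiv)
  refine Metric.eventually_nhds_iff_ball.2 ⟨r, hr, fun ζ hζ => ?_⟩
  have hslice : ∀ t ∈ Metric.ball (0 : 𝕜) r,
      HasDerivAt (fun t => h (Function.update ζ j t)) 0 t := fun t ht => by
    obtain ⟨hd, h0⟩ := hball _ (update_mem_ball_zero hζ ht j)
    exact h0 ▸ hd.hasFDerivAt.comp_hasDerivAt t (hasDerivAt_update ζ j t)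
  have hζj : ζ j ∈ Metric.ball (0 : 𝕜) r :=
    mem_ball_zero_iff.2 ((norm_le_pi_norm ζ j).trans_lt (mem_ball_zero_iff.1 hζ))
  have hconst := Metric.isOpen_ball.is_const_of_deriv_eq_zero Metric.isPreconnected_ball
    (fun t ht => (hslice t ht).differentiableAt.differentiableWithinAt)
    (fun t ht => (hslice t ht).deriv) hζj (Metric.mem_ball_self hr)
  rwa [Function.update_eq_self, ← zeroOn_singleton] at hconst

lemma eventually_fderiv_single_eq_zero_of_eq_comp_zeroOn [Finite ι] {h : (ι → 𝕜) → E} {j : ι}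
    (hdiff : ∀ᶠ ζ in 𝓝 0, DifferentiableAt 𝕜 h ζ)
    (hconst : ∀ᶠ ζ in 𝓝 0, h ζ = h (zeroOn {j} ζ)) :
    ∀ᶠ ζ in 𝓝 0, fderiv 𝕜 h ζ (Pi.single j 1) = 0 := by
  cases nonempty_fintype ι
  filter_upwards [hconst.eventually_nhds, (tendsto_zeroOn_nhds_zero {j}).eventually hdiff]
    with ζ hζ hd
  have hchain : HasFDerivAt h ((fderiv 𝕜 h (zeroOn {j} ζ)).comp (zeroOn {j})) ζ :=
    (hd.hasFDerivAt.comp ζ (zeroOn (𝕜 := 𝕜) {j}).hasFDerivAt).congr_of_eventuallyEq hζ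
  rw [hchain.fderiv, ContinuousLinearMap.comp_apply, zeroOn_singleton_single, map_zero]

lemma eventually_fderiv_single_eq_one_iff [Finite ι] {h : (ι → 𝕜) → 𝕜} {j : ι}
    (hdiff : ∀ᶠ ζ in 𝓝 0, DifferentiableAt 𝕜 h ζ) :
    (∀ᶠ ζ in 𝓝 0, fderiv 𝕜 h ζ (Pi.single j 1) = 1) ↔
      ∀ᶠ ζ in 𝓝 0, h ζ - ζ j = h (zeroOn {j} ζ) := by
  cases nonempty_fintype ι
  have hproj : ∀ ζ : ι → 𝕜, HasFDerivAt (fun ζ => ζ j) (.proj j : (ι → 𝕜) →L[𝕜] 𝕜) ζ :=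
    hasFDerivAt_apply j
  have hdiff' : ∀ᶠ ζ in 𝓝 0, DifferentiableAt 𝕜 (fun ζ => h ζ - ζ j) ζ :=
    hdiff.mono fun ζ hζ => hζ.sub (hproj ζ).differentiableAt
  have hderiv : ∀ᶠ ζ in 𝓝 0, (fderiv 𝕜 h ζ (Pi.single j 1) = 1 ↔
      fderiv 𝕜 (fun ζ => h ζ - ζ j) ζ (Pi.single j 1) = 0) :=
    hdiff.mono fun ζ hζ => by
      rw [(hζ.hasFDerivAt.fun_sub (hproj ζ)).fderiv]
      simp [sub_eq_zero]
  have hindep := Iff.intro (eventually_eq_comp_zeroOn_of_fderiv_single_eq_zero (j := j) hdiff')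
    (eventually_fderiv_single_eq_zero_of_eq_comp_zeroOn hdiff')
  simpa only [zeroOn_singleton_apply_self, sub_zero] using (eventually_congr hderiv).trans hindep

end PartialDerivative

section SliceEquation

variable {ι 𝕜 : Type*} [DecidableEq ι] {F ψ : (ι → 𝕜) → (ι → 𝕜)}

/-- The functional equation characterizing normalizing maps. At points with `ζ j = 0` it reads
`ψ ζ j = 0`; given this, it says that `F (ψ ζ) j - ζ j` does not change when `ζ j` is set to `0`. -/
def SliceEquation [NontriviallyNormedField 𝕜] (F ψ : (ι → 𝕜) → (ι → 𝕜)) : Prop :=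
  ∀ᶠ ζ in 𝓝 (0 : ι → 𝕜), ∀ j,
    F (ψ ζ) j - F (ψ (zeroOn {j} ζ)) j + ψ (zeroOn {j} ζ) j = ζ j

lemma sliceEquation_iff_eventually_sub_eq [Finite ι] [NontriviallyNormedField 𝕜] :
    SliceEquation F ψ ↔ (∀ᶠ ζ in 𝓝 0, ∀ j, ζ j = 0 → ψ ζ j = 0) ∧
      ∀ᶠ ζ in 𝓝 0, ∀ j, F (ψ ζ) j - ζ j = F (ψ (zeroOn {j} ζ)) j := by
  have hslice {P : (ι → 𝕜) → Prop} (hP : ∀ᶠ ζ in 𝓝 0, P ζ) :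
      ∀ᶠ ζ in 𝓝 0, ∀ j, P (zeroOn {j} ζ) :=
    eventually_all.2 fun j => (tendsto_zeroOn_nhds_zero {j}).eventually hP
  constructor
  · intro h
    have hzero : ∀ᶠ ζ in 𝓝 0, ∀ j, ζ j = 0 → ψ ζ j = 0 := h.mono fun ζ hζ j hj => by
      simpa [zeroOn_singleton_of_apply_eq_zero hj, hj] using hζ j
    refine ⟨hzero, ?_⟩
    filter_upwards [h, hslice hzero] with ζ hζ hζ0 j
    linear_combination hζ j - hζ0 j j (zeroOn_singleton_apply_self j ζ)
  · rintro ⟨hzero, hsub⟩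
    filter_upwards [hsub, hslice hzero] with ζ hζ hζ0 j
    linear_combination hζ j + hζ0 j j (zeroOn_singleton_apply_self j ζ)

lemma sliceEquation_iff_eventually_fderiv_single [Finite ι] [RCLike 𝕜]
    (hdiff : ∀ᶠ ζ in 𝓝 0, DifferentiableAt 𝕜 (fun ζ => F (ψ ζ)) ζ) :
    SliceEquation F ψ ↔ (∀ᶠ ζ in 𝓝 0, ∀ j, ζ j = 0 → ψ ζ j = 0) ∧
      ∀ᶠ ζ in 𝓝 0, ∀ j, fderiv 𝕜 (fun ζ' => F (ψ ζ') j) ζ (Pi.single j 1) = 1 := by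
  cases nonempty_fintype ι
  have hcomp (j : ι) : ∀ᶠ ζ in 𝓝 0, DifferentiableAt 𝕜 (fun ζ' => F (ψ ζ') j) ζ :=
    hdiff.mono fun ζ hζ => differentiableAt_pi.1 hζ j
  rw [sliceEquation_iff_eventually_sub_eq, eventually_all (p := fun j ζ => _ = _),
    eventually_all (p := fun j ζ => _ = (1 : 𝕜))]
  simp only [eventually_fderiv_single_eq_one_iff (hcomp _)]

end SliceEquation

section FaceSystem

variable {ι 𝕜 : Type*} [DecidableEq ι] [NontriviallyNormedField 𝕜]
  {F ψ : (ι → 𝕜) → (ι → 𝕜)}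

/-- The system `Φ` obtained by writing the slice equation at all points `zeroOn S ζ`, with
independent unknowns `y S` in place of the values `ψ (zeroOn S ζ)`. -/
def faceSystem (F : (ι → 𝕜) → (ι → 𝕜)) (y : Finset ι → ι → 𝕜) : Finset ι → ι → 𝕜 :=
  fun S j => F (y S) j - F (y (insert j S)) j + y (insert j S) j

/-- The right-hand side of the face system: the family of all coordinate projections of a point. -/
def faces : (ι → 𝕜) →L[𝕜] (Finset ι → ι → 𝕜) :=
  ContinuousLinearMap.pi zeroOn

lemma faces_apply (ζ : ι → 𝕜) (S : Finset ι) : faces ζ S = zeroOn S ζ := rfl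

lemma tendsto_faces_nhds_zero : Tendsto (faces : (ι → 𝕜) →L[𝕜] _) (𝓝 0) (𝓝 0) :=
  faces.continuous.tendsto' 0 0 (map_zero _)

lemma faceSystem_zero (hF0 : F 0 = 0) : faceSystem F 0 = 0 := by
  ext S j
  simp [faceSystem, hF0]

lemma SliceEquation.eventually_faceSystem_eq_faces [Finite ι] (h : SliceEquation F ψ) :
    ∀ᶠ ζ in 𝓝 0, faceSystem F (fun S => ψ (zeroOn S ζ)) = faces ζ := by
  filter_upwards [eventually_all.2 fun S : Finset ι =>
    (tendsto_zeroOn_nhds_zero (𝕜 := 𝕜) S).eventually h] with ζ hζ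
  ext S j
  simpa only [faceSystem, faces_apply, zeroOn_zeroOn, Finset.singleton_union] using hζ S j

lemma analyticAt_faceSystem [Fintype ι] (hF : AnalyticAt 𝕜 F 0) :
    AnalyticAt 𝕜 (faceSystem F) 0 := by
  have heval (S : Finset ι) : AnalyticAt 𝕜 (fun y : Finset ι → ι → 𝕜 => y S) 0 :=
    (ContinuousLinearMap.proj (R := 𝕜) (φ := fun _ : Finset ι => ι → 𝕜) S).analyticAt 0
  have hFeval (S : Finset ι) : AnalyticAt 𝕜 (fun y : Finset ι → ι → 𝕜 => F (y S)) 0 :=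
    AnalyticAt.fun_comp (g := F) hF (heval S)
  refine AnalyticAt.pi fun S => AnalyticAt.pi fun j => ?_
  exact ((analyticAt_pi_iff.1 (hFeval S) j).sub (analyticAt_pi_iff.1 (hFeval (insert j S)) j)).add
    (analyticAt_pi_iff.1 (heval (insert j S)) j)

lemma hasFDerivAt_faceSystem [Finite ι] (hF : HasFDerivAt F (.id 𝕜 (ι → 𝕜)) 0) :
    HasFDerivAt (faceSystem F) (.id 𝕜 (Finset ι → ι → 𝕜)) 0 := by
  cases nonempty_fintype ι
  have heval (S : Finset ι) : HasFDerivAt (fun y : Finset ι → ι → 𝕜 => y S) (.proj (R := 𝕜) S) 0 :=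
    hasFDerivAt_apply S 0
  have hFeval (S : Finset ι) :
      HasFDerivAt (fun y : Finset ι → ι → 𝕜 => F (y S)) (.proj (R := 𝕜) S) 0 :=
    HasFDerivAt.comp (g := F) (g' := .id 𝕜 _) 0 hF (heval S)
  refine hasFDerivAt_pi'.2 fun S => hasFDerivAt_pi'.2 fun j => ?_
  refine (((hasFDerivAt_pi'.1 (hFeval S) j).sub (hasFDerivAt_pi'.1 (hFeval (insert j S)) j)).add
    (hasFDerivAt_pi'.1 (heval (insert j S)) j)).congr_fderiv ?_
  ext y
  simp

lemma exists_analyticAt_inverse_faceSystem [Fintype ι] [CompleteSpace 𝕜]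
    (hF : AnalyticAt 𝕜 F 0) (hF0 : F 0 = 0) (hDF : fderiv 𝕜 F 0 = .id 𝕜 (ι → 𝕜)) :
    ∃ G : (Finset ι → ι → 𝕜) → (Finset ι → ι → 𝕜),
      AnalyticAt 𝕜 G 0 ∧ HasFDerivAt G (.id 𝕜 _) 0 ∧
      (∀ᶠ y in 𝓝 0, G (faceSystem F y) = y) ∧ ∀ᶠ z in 𝓝 0, faceSystem F (G z) = z := by
  have hderiv := hasFDerivAt_faceSystem (hDF ▸ hF.differentiableAt.hasFDerivAt)
  have hinverse := exists_analyticAt_local_inverse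
    (f' := ContinuousLinearEquiv.refl 𝕜 _) (analyticAt_faceSystem hF) hderiv
  rwa [faceSystem_zero hF0] at hinverse

section Inverse

variable {G : (Finset ι → ι → 𝕜) → (Finset ι → ι → 𝕜)}

lemma eventually_inverse_faces_insert (hG : Tendsto G (𝓝 0) (𝓝 0))
    (hleft : ∀ᶠ y in 𝓝 0, G (faceSystem F y) = y)
    (hright : ∀ᶠ z in 𝓝 0, faceSystem F (G z) = z) (j : ι) :
    ∀ᶠ ζ in 𝓝 0, ∀ S, G (faces ζ) (insert j S) = G (faces (zeroOn {j} ζ)) S := by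
  have hy := hG.comp (tendsto_faces_nhds_zero (ι := ι) (𝕜 := 𝕜))
  have hshift : Tendsto (fun ζ S => G (faces ζ) (insert j S)) (𝓝 0) (𝓝 0) :=
    tendsto_pi_nhds.2 fun S => tendsto_pi_nhds.1 hy (insert j S)
  filter_upwards [hshift.eventually hleft, tendsto_faces_nhds_zero.eventually hright]
    with ζ hleftζ hrightζ S
  have hsystem : faceSystem F (fun S => G (faces ζ) (insert j S)) = faces (zeroOn {j} ζ) := by
    ext S k
    rw [faces_apply, zeroOn_zeroOn, Finset.union_comm, Finset.singleton_union, ← faces_apply]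
    simpa only [faceSystem, Finset.insert_comm] using congrFun₂ hrightζ (insert j S) k
  rw [← hsystem, hleftζ]

lemma sliceEquation_inverse_faces [Finite ι] (hG : Tendsto G (𝓝 0) (𝓝 0))
    (hleft : ∀ᶠ y in 𝓝 0, G (faceSystem F y) = y)
    (hright : ∀ᶠ z in 𝓝 0, faceSystem F (G z) = z) :
    SliceEquation F (fun ζ => G (faces ζ) ∅) := by
  filter_upwards [tendsto_faces_nhds_zero.eventually hright,
    eventually_all.2 (eventually_inverse_faces_insert hG hleft hright)] with ζ hζ hinsert j
  simpa only [faceSystem, hinsert j, faces_apply ζ, zeroOn_empty] using congrFun₂ hζ ∅ j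

lemma SliceEquation.eventuallyEq_inverse_faces [Finite ι] (h : SliceEquation F ψ)
    (hψ : Tendsto ψ (𝓝 0) (𝓝 0)) (hleft : ∀ᶠ y in 𝓝 0, G (faceSystem F y) = y) :
    ψ =ᶠ[𝓝 0] fun ζ => G (faces ζ) ∅ := by
  have hfaces : Tendsto (fun ζ S => ψ (zeroOn S ζ)) (𝓝 0) (𝓝 (0 : Finset ι → ι → 𝕜)) :=
    tendsto_pi_nhds.2 fun S => hψ.comp (tendsto_zeroOn_nhds_zero S)
  filter_upwards [hfaces.eventually hleft, h.eventually_faceSystem_eq_faces] with ζ hleftζ hζ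
  simp only [← hζ, hleftζ, zeroOn_empty]

end Inverse

theorem exists_analyticAt_sliceEquation_unique [Fintype ι] [CompleteSpace 𝕜]
    (hF : AnalyticAt 𝕜 F 0) (hF0 : F 0 = 0) (hDF : fderiv 𝕜 F 0 = .id 𝕜 (ι → 𝕜)) :
    ∃ ψ₀ : (ι → 𝕜) → (ι → 𝕜), (AnalyticAt 𝕜 ψ₀ 0 ∧ ψ₀ 0 = 0 ∧ fderiv 𝕜 ψ₀ 0 = .id 𝕜 (ι → 𝕜) ∧
      SliceEquation F ψ₀) ∧
      ∀ ψ, Tendsto ψ (𝓝 0) (𝓝 0) → SliceEquation F ψ → ψ =ᶠ[𝓝 0] ψ₀ := by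
  obtain ⟨G, hG, hGderiv, hleft, hright⟩ := exists_analyticAt_inverse_faceSystem hF hF0 hDF
  have hG0 : G 0 = 0 := by simpa only [faceSystem_zero hF0] using hleft.self_of_nhds
  have hGtendsto : Tendsto G (𝓝 0) (𝓝 0) := by simpa only [hG0] using hG.continuousAt.tendsto
  rw [← map_zero (faces (ι := ι) (𝕜 := 𝕜))] at hG hGderiv
  have hanalytic : AnalyticAt 𝕜 (fun ζ => G (faces ζ)) 0 :=
    hG.fun_comp ((faces (ι := ι) (𝕜 := 𝕜)).analyticAt 0)
  have hderiv : HasFDerivAt (fun ζ => G (faces ζ)) faces 0 :=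
    hGderiv.comp 0 (faces (ι := ι) (𝕜 := 𝕜)).hasFDerivAt
  refine ⟨fun ζ => G (faces ζ) ∅, ⟨analyticAt_pi_iff.1 hanalytic ∅, ?_, ?_,
    sliceEquation_inverse_faces hGtendsto hleft hright⟩,
    fun ψ hψ h => h.eventuallyEq_inverse_faces hψ hleft⟩
  · simp only [map_zero, hG0, Pi.zero_apply]
  · rw [(hasFDerivAt_pi'.1 hderiv ∅).fderiv]
    exact ContinuousLinearMap.ext zeroOn_empty

end FaceSystem

section NormalizingGerm

variable {ι 𝕜 : Type*} [Fintype ι] [DecidableEq ι] [RCLike 𝕜] {F ψ : (ι → 𝕜) → (ι → 𝕜)}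

/-- The analogue of `IsNormalizingMap` for real- or complex-analytic maps in coordinates indexed by
an arbitrary finite type. -/
structure IsNormalizingGerm (F ψ : (ι → 𝕜) → (ι → 𝕜)) : Prop where
  analyticAt : AnalyticAt 𝕜 ψ 0
  apply_zero : ψ 0 = 0
  fderiv_zero : fderiv 𝕜 ψ 0 = ContinuousLinearMap.id 𝕜 (ι → 𝕜)
  eventually_apply_eq_zero : ∀ᶠ ζ in 𝓝 0, ∀ j, ζ j = 0 → ψ ζ j = 0
  eventually_fderiv_single : ∀ᶠ ζ in 𝓝 0, ∀ j,
    fderiv 𝕜 (fun ζ' => F (ψ ζ') j) ζ (Pi.single j 1) = 1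

lemma isNormalizingMap_iff_isNormalizingGerm {p : ℕ} {F ψ : (Fin p → ℂ) → (Fin p → ℂ)} :
    IsNormalizingMap p F ψ ↔ IsNormalizingGerm F ψ :=
  ⟨fun ⟨ha, h0, hd, hzero, hone⟩ => ⟨ha, h0, hd, hzero, hone⟩,
    fun ⟨ha, h0, hd, hzero, hone⟩ => ⟨ha, h0, hd, hzero, hone⟩⟩

lemma isNormalizingGerm_iff_sliceEquation (hF : AnalyticAt 𝕜 F 0) :
    IsNormalizingGerm F ψ ↔ AnalyticAt 𝕜 ψ 0 ∧ ψ 0 = 0 ∧ fderiv 𝕜 ψ 0 = .id 𝕜 (ι → 𝕜) ∧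
      SliceEquation F ψ := by
  have hiff (ha : AnalyticAt 𝕜 ψ 0) (h0 : ψ 0 = 0) :=
    have hcomp : AnalyticAt 𝕜 (fun ζ => F (ψ ζ)) 0 := AnalyticAt.fun_comp (h0.symm ▸ hF) ha
    sliceEquation_iff_eventually_fderiv_single
      (hcomp.eventually_analyticAt.mono fun _ hζ => hζ.differentiableAt)
  constructor
  · rintro ⟨ha, h0, hd, hzero, hone⟩
    exact ⟨ha, h0, hd, (hiff ha h0).2 ⟨hzero, hone⟩⟩
  · rintro ⟨ha, h0, hd, hslice⟩
    obtain ⟨hzero, hone⟩ := (hiff ha h0).1 hslice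
    exact ⟨ha, h0, hd, hzero, hone⟩

theorem stmt_10_general (hF : AnalyticAt 𝕜 F 0) (hF0 : F 0 = 0)
    (hDF : fderiv 𝕜 F 0 = ContinuousLinearMap.id 𝕜 (ι → 𝕜)) :
    (∃ ψ, IsNormalizingGerm F ψ) ∧
    ∀ ψ₁ ψ₂, IsNormalizingGerm F ψ₁ → IsNormalizingGerm F ψ₂ → ψ₁ =ᶠ[𝓝 0] ψ₂ := by
  obtain ⟨ψ₀, hψ₀, hunique⟩ := exists_analyticAt_sliceEquation_unique hF hF0 hDF
  have heq (ψ) (h : IsNormalizingGerm F ψ) : ψ =ᶠ[𝓝 0] ψ₀ := by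
    have hψ : Tendsto ψ (𝓝 0) (𝓝 0) := by
      simpa only [h.apply_zero] using h.analyticAt.continuousAt.tendsto
    exact hunique ψ hψ ((isNormalizingGerm_iff_sliceEquation hF).1 h).2.2.2
  exact ⟨⟨ψ₀, (isNormalizingGerm_iff_sliceEquation hF).2 hψ₀⟩,
    fun ψ₁ ψ₂ h₁ h₂ => (heq ψ₁ h₁).trans (heq ψ₂ h₂).symm⟩

end NormalizingGerm

/-- For every holomorphic germ `F : (ℂ^p, 0) → (ℂ^p, 0)` tangent to the identity there exists
a normalizing map `ψ`, unique as a germ at `0`. -/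
theorem stmt_10 (p : ℕ) (hp : 1 ≤ p) (F : (Fin p → ℂ) → (Fin p → ℂ))
    (hF : AnalyticAt ℂ F 0) (hF0 : F 0 = 0)
    (hDF : fderiv ℂ F 0 = ContinuousLinearMap.id ℂ (Fin p → ℂ)) :
    (∃ ψ, IsNormalizingMap p F ψ) ∧
    ∀ ψ₁ ψ₂, IsNormalizingMap p F ψ₁ → IsNormalizingMap p F ψ₂ →
      ψ₁ =ᶠ[nhds (0 : Fin p → ℂ)] ψ₂ := by
  simpa only [isNormalizingMap_iff_isNormalizingGerm] using stmt_10_general hF hF0 hDF
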